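/- Positivity of the potential of competing power nonlinearities when the focusing part is weak: let 0 < α₂ < α₁ and a₂ ≤ 1, set f(r) := (r^{α₁} − 1) − a₂·(r^{α₂} − 1) and F(ρ) := ∫₁^ρ f(r) dr. Then F(ρ) > 0 for every ρ ≥ 0 with ρ ≠ 1, and F(1) = 0. -/

import Mathlib

/-!
Writing `f r = (r ^ α₁ - r ^ α₂) + (1 - a₂) * (r ^ α₂ - 1)`, both summands carry the sign of
`r - 1`, the first one strictly. Hence `f` is negative on `(0, 1)` and positive on `(1, ∞)`, so
integrating it away from `1` in either direction gives a positive value.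
-/

open MeasureTheory Set

theorem intervalIntegral_pos_of_neg_of_pos {f : ℝ → ℝ} {a b : ℝ}
    (hf : IntervalIntegrable f volume a b) (hab : a ≠ b)
    (hneg : ∀ x ∈ Ioo b a, f x < 0) (hpos : ∀ x ∈ Ioo a b, 0 < f x) :
    0 < ∫ x in a..b, f x := by
  rcases hab.lt_or_gt with hlt | hgt
  · exact intervalIntegral.intervalIntegral_pos_of_pos_on hf hpos hlt
  · rw [intervalIntegral.integral_symm, ← intervalIntegral.integral_neg]
    exact intervalIntegral.intervalIntegral_pos_of_pos_on hf.symm.neg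
      (fun x hx ↦ neg_pos.2 (hneg x hx)) hgt

/-- The competing power nonlinearity `f`, normalised to vanish at the far-field value `r = 1`;
`a₂` is the strength of the focusing power `α₂` relative to the defocusing power `α₁`. -/
noncomputable def competingPowers (α₁ α₂ a₂ r : ℝ) : ℝ :=
  (r ^ α₁ - 1) - a₂ * (r ^ α₂ - 1)

theorem competingPowers_eq_sub_add (α₁ α₂ a₂ r : ℝ) :
    competingPowers α₁ α₂ a₂ r = (r ^ α₁ - r ^ α₂) + (1 - a₂) * (r ^ α₂ - 1) := by
  unfold competingPowers
  ring

theorem intervalIntegrable_competingPowers {α₁ α₂ : ℝ} (hα₁ : -1 < α₁) (hα₂ : -1 < α₂)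
    (a₂ a b : ℝ) : IntervalIntegrable (competingPowers α₁ α₂ a₂) volume a b :=
  have rpow_sub_one {α : ℝ} (hα : -1 < α) :
      IntervalIntegrable (fun r : ℝ ↦ r ^ α - 1) volume a b :=
    (intervalIntegral.intervalIntegrable_rpow' hα).sub intervalIntegrable_const
  (rpow_sub_one hα₁).sub ((rpow_sub_one hα₂).const_mul a₂)

section CompetingPowers

variable {α₁ α₂ a₂ r : ℝ}

theorem competingPowers_neg (hα₂ : 0 ≤ α₂) (hα : α₂ < α₁) (ha₂ : a₂ ≤ 1)
    (hr₀ : 0 < r) (hr₁ : r < 1) : competingPowers α₁ α₂ a₂ r < 0 := by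
  rw [competingPowers_eq_sub_add]
  exact add_neg_of_neg_of_nonpos
    (sub_neg.2 (Real.rpow_lt_rpow_of_exponent_gt hr₀ hr₁ hα))
    (mul_nonpos_of_nonneg_of_nonpos (sub_nonneg.2 ha₂)
      (sub_nonpos.2 (Real.rpow_le_one hr₀.le hr₁.le hα₂)))

theorem competingPowers_pos (hα₂ : 0 ≤ α₂) (hα : α₂ < α₁) (ha₂ : a₂ ≤ 1) (hr : 1 < r) :
    0 < competingPowers α₁ α₂ a₂ r := by
  rw [competingPowers_eq_sub_add]
  exact add_pos_of_pos_of_nonneg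
    (sub_pos.2 (Real.rpow_lt_rpow_of_exponent_lt hr hα))
    (mul_nonneg (sub_nonneg.2 ha₂) (sub_nonneg.2 (Real.one_le_rpow hr.le hα₂)))

end CompetingPowers

/-- Positivity of the potential of competing power nonlinearities when the focusing
part is weak: for `0 < α₂ < α₁`, `a₂ ≤ 1`, `f r = (r^α₁ - 1) - a₂ (r^α₂ - 1)` and
`F ρ = ∫₁^ρ f`, one has `F ρ > 0` for every `ρ ≥ 0` with `ρ ≠ 1`, and `F 1 = 0`. -/
theorem positivity_weak_focusing
    (α₁ α₂ a₂ : ℝ) (hα₂ : 0 < α₂) (hα : α₂ < α₁) (ha₂ : a₂ ≤ 1) :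
    (∀ ρ : ℝ, 0 ≤ ρ → ρ ≠ 1 →
      0 < ∫ r in (1:ℝ)..ρ, ((r ^ α₁ - 1) - a₂ * (r ^ α₂ - 1))) ∧
    (∫ r in (1:ℝ)..(1:ℝ), ((r ^ α₁ - 1) - a₂ * (r ^ α₂ - 1))) = 0 := by
  refine ⟨fun ρ hρ hne ↦ ?_, intervalIntegral.integral_same⟩
  change 0 < ∫ r in (1:ℝ)..ρ, competingPowers α₁ α₂ a₂ r
  have hint : IntervalIntegrable (competingPowers α₁ α₂ a₂) volume 1 ρ :=
    intervalIntegrable_competingPowers (by linarith) (by linarith) a₂ 1 ρ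
  exact intervalIntegral_pos_of_neg_of_pos hint hne.symm
    (fun r hr ↦ competingPowers_neg hα₂.le hα ha₂ (hρ.trans_lt hr.1) hr.2)
    (fun r hr ↦ competingPowers_pos hα₂.le hα ha₂ hr.1)
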